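/- Let 0 < α < 1. Then, as r → −∞, E_α(r) + 1/(Γ(1−α)·r) = O(1/r²); that is, there exist constants C > 0 and R > 0 such that |E_α(r) + 1/(Γ(1−α) r)| ≤ C/r² for all r ≤ −R. -/

import Mathlib

/-!
The substitution `ζ = exp w` turns Hankel's contour into the boundary of a half-strip
`a ≤ Re w`, `|Im w| ≤ π`. Write `H f` for `(2πi)⁻¹` times the integral of `f` over that boundary;
it does not depend on `a`, and `1 / Γ (1 - s) = H (exp (s w + exp w))` for every complex `s`. For
`x > 0` put `Q β = exp (β w + exp w) / (x + exp (α w))`, which has no pole in the strip because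
`α < 1`. Then `x * H (Q β) + H (Q (β + α)) = 1 / Γ (1 - β)`.

Iterating through `β = 0, -α, -2α, …` produces the partial sums of `E_α(-x)`, with a remainder
that vanishes in the limit once `x < exp (α a)`; hence `E_α(-x) = H (Q α)`. One step in the other
direction, `β = α`, isolates the term `1 / (Γ (1 - α) x)` and leaves `-H (Q (2α)) / x`. Since
`2α > 0`, letting `a → -∞` collapses this last contour onto the lines `Im w = ±π`, where
`|x + exp (α w)| ≥ x sin (απ)`, so it is `O(1 / x)`.
-/

open Real

/-- The Mittag-Leffler function `E_α(r) = ∑ r^k / Γ(1+kα)`. -/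
noncomputable def mittagLeffler (α r : ℝ) : ℝ :=
  ∑' k : ℕ, r ^ k / Real.Gamma (1 + k * α)

section Hankel

open Complex (I)
open scoped Complex
open Filter Topology MeasureTheory Set

theorem integrable_exp_smul_comp_exp {E : Type*} [NormedAddCommGroup E] [NormedSpace ℝ E]
    {g : ℝ → E} : (Integrable fun u => rexp u • g (rexp u)) ↔ IntegrableOn g (Ioi 0) := by
  simpa [Real.range_exp, abs_of_pos, Real.exp_pos] using
    (integrableOn_image_iff_integrableOn_abs_deriv_smul MeasurableSet.univ
      (fun u _ => (Real.hasDerivAt_exp u).hasDerivWithinAt) Real.exp_injective.injOn g).symm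

theorem integral_exp_smul_comp_exp {E : Type*} [NormedAddCommGroup E] [NormedSpace ℝ E]
    (g : ℝ → E) : ∫ u, rexp u • g (rexp u) = ∫ y in Ioi 0, g y := by
  simpa [Real.range_exp, abs_of_pos, Real.exp_pos] using
    (integral_image_eq_integral_abs_deriv_smul MeasurableSet.univ
      (fun u _ => (Real.hasDerivAt_exp u).hasDerivWithinAt) Real.exp_injective.injOn g).symm

theorem cexp_mul_sub_exp_eq_smul (s : ℂ) (u : ℝ) :
    cexp (s * u - rexp u) = rexp u • ((rexp (-rexp u) : ℂ) * (rexp u : ℂ) ^ (s - 1)) := by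
  rw [Complex.cpow_def_of_ne_zero (by exact_mod_cast (Real.exp_pos u).ne'),
    ← Complex.ofReal_log (Real.exp_pos u).le, Real.log_exp, Complex.real_smul,
    Complex.ofReal_exp u, Complex.ofReal_exp, ← Complex.exp_add, ← Complex.exp_add]
  congr 1
  push_cast
  ring

theorem integrable_cexp_mul_sub_exp {s : ℂ} (hs : 0 < s.re) :
    Integrable fun u : ℝ => cexp (s * u - rexp u) := by
  simp only [cexp_mul_sub_exp_eq_smul]
  exact integrable_exp_smul_comp_exp.2 (Complex.GammaIntegral_convergent hs)

theorem integral_cexp_mul_sub_exp {s : ℂ} (hs : 0 < s.re) :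
    ∫ u : ℝ, cexp (s * u - rexp u) = Complex.Gamma s := by
  simp only [cexp_mul_sub_exp_eq_smul]
  rw [integral_exp_smul_comp_exp fun y : ℝ => (rexp (-y) : ℂ) * (y : ℂ) ^ (s - 1),
    Complex.Gamma_eq_integral hs, Complex.GammaIntegral]

theorem norm_cexp_mul_sub_exp (s : ℂ) (u : ℝ) :
    ‖cexp (s * u - rexp u)‖ = rexp (s.re * u - rexp u) := by
  rw [Complex.norm_exp, Complex.sub_re, Complex.re_mul_ofReal, Complex.ofReal_re]

theorem integral_exp_mul_sub_exp {c : ℝ} (hc : 0 < c) :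
    ∫ u : ℝ, rexp (c * u - rexp u) = Real.Gamma c := by
  have h := integral_cexp_mul_sub_exp (s := (c : ℂ)) (by simpa using hc)
  rw [Complex.Gamma_ofReal] at h
  exact_mod_cast h

theorem integrable_exp_mul_sub_exp {c : ℝ} (hc : 0 < c) :
    Integrable fun u : ℝ => rexp (c * u - rexp u) := by
  simpa only [norm_cexp_mul_sub_exp, Complex.ofReal_re] using
    (integrable_cexp_mul_sub_exp (s := (c : ℂ)) (by simpa using hc)).norm

theorem integrableOn_Ioi_exp_mul_sub_exp (c a : ℝ) :
    IntegrableOn (fun u : ℝ => rexp (c * u - rexp u)) (Ioi a) := by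
  have ht : 0 < c + (|c| + 1) := by linarith [neg_abs_le c]
  refine Integrable.mono' (((integrable_exp_mul_sub_exp ht).const_mul
    (rexp (-(|c| + 1) * a))).integrableOn) (by fun_prop) ?_
  filter_upwards [ae_restrict_mem measurableSet_Ioi] with u (hu : a < u)
  rw [Real.norm_eq_abs, Real.abs_exp, ← Real.exp_add, Real.exp_le_exp]
  nlinarith [abs_nonneg c]

/-- The closed strip `|Im w| ≤ π`: `exp` maps it onto the plane cut along the negative
half-line, its two edges covering the two sides of the cut. -/
def hankelStrip : Set ℂ := Complex.im ⁻¹' Icc (-π) π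

/-- The difference between the values of `f` on the upper and lower edges of the strip. -/
noncomputable def stripJump (f : ℂ → ℂ) (u : ℝ) : ℂ := f (u + π * I) - f (u - π * I)

/-- Hankel's contour integral, normalised by `(2πi)⁻¹`, in the coordinate `w = log ζ`: the contour
is the boundary of the half-strip `a ≤ Re w`, `|Im w| ≤ π`, coming from `+∞ - πi` and returning to
`+∞ + πi`. -/
noncomputable def hankelIntegral (f : ℂ → ℂ) (a : ℝ) : ℂ :=
  (2 * π * I)⁻¹ * ((∫ u in Ioi a, stripJump f u) + I * ∫ θ in -π..π, f (a + θ * I))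

/-- Functions whose Hankel integral converges and does not depend on the abscissa `a`:
holomorphic in the closed strip and integrable towards `+∞` along both of its edges. -/
structure IsHankelIntegrand (f : ℂ → ℂ) : Prop where
  differentiableOn : DifferentiableOn ℂ f hankelStrip
  integrableOn_upper : ∀ a : ℝ, IntegrableOn (fun u : ℝ => f (u + π * I)) (Ioi a)
  integrableOn_lower : ∀ a : ℝ, IntegrableOn (fun u : ℝ => f (u - π * I)) (Ioi a)

theorem uIcc_neg_pi_pi : uIcc (-π) π = Icc (-π) π :=
  uIcc_of_le (neg_le_self Real.pi_pos.le)

theorem ofReal_add_mul_I_mem_hankelStrip (u : ℝ) {θ : ℝ} (hθ : θ ∈ Icc (-π) π) :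
    (u + θ * I : ℂ) ∈ hankelStrip := by
  simpa [hankelStrip] using hθ

theorem upper_edge_mem_hankelStrip (u : ℝ) : (u + π * I : ℂ) ∈ hankelStrip :=
  ofReal_add_mul_I_mem_hankelStrip u (right_mem_Icc.2 (neg_le_self Real.pi_pos.le))

theorem lower_edge_mem_hankelStrip (u : ℝ) : (u - π * I : ℂ) ∈ hankelStrip := by
  simpa [sub_eq_add_neg] using
    ofReal_add_mul_I_mem_hankelStrip u (left_mem_Icc.2 (neg_le_self Real.pi_pos.le))

theorem continuous_comp_upper_edge {f : ℂ → ℂ} (hf : ContinuousOn f hankelStrip) :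
    Continuous fun u : ℝ => f (u + π * I) :=
  hf.comp_continuous (by fun_prop) upper_edge_mem_hankelStrip

theorem continuous_comp_lower_edge {f : ℂ → ℂ} (hf : ContinuousOn f hankelStrip) :
    Continuous fun u : ℝ => f (u - π * I) :=
  hf.comp_continuous (by fun_prop) lower_edge_mem_hankelStrip

theorem hankelIntegral_congr {f g : ℂ → ℂ} (h : EqOn f g hankelStrip) (a : ℝ) :
    hankelIntegral f a = hankelIntegral g a := by
  have hjump : stripJump f = stripJump g := funext fun u => by
    rw [stripJump, stripJump, h (upper_edge_mem_hankelStrip u), h (lower_edge_mem_hankelStrip u)]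
  have hvert : ∫ θ in -π..π, f (a + θ * I) = ∫ θ in -π..π, g (a + θ * I) :=
    intervalIntegral.integral_congr fun θ hθ =>
      h (ofReal_add_mul_I_mem_hankelStrip a (uIcc_neg_pi_pi ▸ hθ))
  rw [hankelIntegral, hankelIntegral, hjump, hvert]

theorem hankelIntegral_const_mul (c : ℂ) (f : ℂ → ℂ) (a : ℝ) :
    hankelIntegral (fun w => c * f w) a = c * hankelIntegral f a := by
  simp only [hankelIntegral, stripJump, ← mul_sub, integral_const_mul,
    intervalIntegral.integral_const_mul]
  ring

namespace IsHankelIntegrand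

variable {f g : ℂ → ℂ}

theorem const_mul (hf : IsHankelIntegrand f) (c : ℂ) : IsHankelIntegrand fun w => c * f w where
  differentiableOn := hf.differentiableOn.const_mul c
  integrableOn_upper a := (hf.integrableOn_upper a).const_mul c
  integrableOn_lower a := (hf.integrableOn_lower a).const_mul c

theorem add (hf : IsHankelIntegrand f) (hg : IsHankelIntegrand g) :
    IsHankelIntegrand fun w => f w + g w where
  differentiableOn := hf.differentiableOn.add hg.differentiableOn
  integrableOn_upper a := (hf.integrableOn_upper a).add (hg.integrableOn_upper a)
  integrableOn_lower a := (hf.integrableOn_lower a).add (hg.integrableOn_lower a)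

theorem integrableOn_stripJump (hf : IsHankelIntegrand f) (a : ℝ) :
    IntegrableOn (stripJump f) (Ioi a) :=
  (hf.integrableOn_upper a).sub (hf.integrableOn_lower a)

theorem continuousOn_vertical (hf : IsHankelIntegrand f) (a : ℝ) :
    ContinuousOn (fun θ : ℝ => f (a + θ * I)) (uIcc (-π) π) := by
  rw [uIcc_neg_pi_pi]
  exact hf.differentiableOn.continuousOn.comp (by fun_prop)
    fun θ hθ => ofReal_add_mul_I_mem_hankelStrip a hθ

theorem hankelIntegral_add (hf : IsHankelIntegrand f) (hg : IsHankelIntegrand g) (a : ℝ) :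
    hankelIntegral (fun w => f w + g w) a = hankelIntegral f a + hankelIntegral g a := by
  have hjump : stripJump (fun w => f w + g w) = fun u => stripJump f u + stripJump g u :=
    funext fun u => add_sub_add_comm _ _ _ _
  rw [hankelIntegral, hjump,
    integral_add (hf.integrableOn_stripJump a) (hg.integrableOn_stripJump a),
    intervalIntegral.integral_add (hf.continuousOn_vertical a).intervalIntegrable
      (hg.continuousOn_vertical a).intervalIntegrable, hankelIntegral, hankelIntegral]
  ring

theorem hankelIntegral_indep (hf : IsHankelIntegrand f) (a b : ℝ) :
    hankelIntegral f a = hankelIntegral f b := by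
  have hrect : (∫ u : ℝ in a..b, f (u - π * I)) - (∫ u : ℝ in a..b, f (u + π * I)) +
      I * (∫ θ in -π..π, f (b + θ * I)) - I * ∫ θ in -π..π, f (a + θ * I) = 0 := by
    simpa [← sub_eq_add_neg] using
      Complex.integral_boundary_rect_eq_zero_of_differentiableOn f (a - π * I) (b + π * I)
        (hf.differentiableOn.mono fun w hw => by
          simpa [hankelStrip, uIcc_neg_pi_pi] using hw.2)
  have hupper : IntervalIntegrable (fun u : ℝ => f (u + π * I)) volume a b :=
    (continuous_comp_upper_edge hf.differentiableOn.continuousOn).intervalIntegrable a b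
  have hlower : IntervalIntegrable (fun u : ℝ => f (u - π * I)) volume a b :=
    (continuous_comp_lower_edge hf.differentiableOn.continuousOn).intervalIntegrable a b
  have hjump := intervalIntegral.integral_Ioi_sub_Ioi' (hf.integrableOn_stripJump a)
    (hf.integrableOn_stripJump b)
  simp only [stripJump, intervalIntegral.integral_sub hupper hlower] at hjump
  simp only [hankelIntegral, stripJump]
  linear_combination (2 * π * I)⁻¹ * (hjump - hrect)

theorem hankelIntegral_eq_integral_stripJump_add (hf : IsHankelIntegrand f)
    (hjump : Integrable (stripJump f)) {ℓ : ℂ}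
    (hℓ : Tendsto f (comap Complex.re atBot ⊓ 𝓟 hankelStrip) (𝓝 ℓ)) (a : ℝ) :
    hankelIntegral f a = (2 * π * I)⁻¹ * (∫ u, stripJump f u) + ℓ := by
  have hedges : Tendsto (fun b => ∫ u in Ioi b, stripJump f u) atBot (𝓝 (∫ u, stripJump f u)) :=
    (aecover_Ioi tendsto_id).integral_tendsto_of_countably_generated hjump
  have hunif : TendstoUniformlyOn (fun (b θ : ℝ) => f (b + θ * I)) (fun _ => ℓ) atBot
      (uIcc (-π) π) := by
    rw [uIcc_neg_pi_pi, tendstoUniformlyOn_iff_tendsto, ← Uniform.tendsto_nhds_right]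
    refine hℓ.comp (tendsto_inf.2 ⟨tendsto_comap_iff.2 ?_, tendsto_principal.2 ?_⟩)
    · simpa [Function.comp_def] using tendsto_fst
    · filter_upwards [prod_mem_prod univ_mem (mem_principal_self _)] with q hq
      exact ofReal_add_mul_I_mem_hankelStrip q.1 hq.2
  have hvert : Tendsto (fun b : ℝ => ∫ θ in -π..π, f (b + θ * I)) atBot (𝓝 (∫ _ in -π..π, ℓ)) :=
    hunif.tendsto_intervalIntegral_of_continuousOn (.of_forall hf.continuousOn_vertical)
  have hlim := (hedges.add (hvert.const_mul I)).const_mul (2 * π * I)⁻¹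
  have hconst : Tendsto (hankelIntegral f) atBot (𝓝 (hankelIntegral f a)) :=
    tendsto_const_nhds.congr fun b => hf.hankelIntegral_indep a b
  have hmean : I * ∫ _ in -π..π, ℓ = 2 * π * I * ℓ := by
    rw [intervalIntegral.integral_const, Complex.real_smul]
    push_cast
    ring
  rw [tendsto_nhds_unique hconst hlim, hmean, mul_add,
    inv_mul_cancel_left₀ Complex.two_pi_I_ne_zero]

theorem hankelIntegral_eq_zero_of_hasDerivAt (hf : IsHankelIntegrand f) (hg : IsHankelIntegrand g)
    (hfg : ∀ w, HasDerivAt f (g w) w) (a : ℝ) : hankelIntegral g a = 0 := by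
  have hedge (c : ℂ) (u : ℝ) : HasDerivAt (fun u : ℝ => f (u + c)) (g (u + c)) u :=
    ((hfg (u + c)).comp_add_const (u : ℂ) c).comp_ofReal
  have hray (c : ℂ) (hfc : IntegrableOn (fun u : ℝ => f (u + c)) (Ioi a))
      (hgc : IntegrableOn (fun u : ℝ => g (u + c)) (Ioi a)) :
      ∫ u : ℝ in Ioi a, g (u + c) = -f (a + c) := by
    rw [integral_Ioi_of_hasDerivAt_of_tendsto' (fun u _ => hedge c u) hgc
      (tendsto_zero_of_hasDerivAt_of_integrableOn_Ioi (fun u _ => hedge c u) hgc hfc), zero_sub]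
  have hupper := hray (π * I) (hf.integrableOn_upper a) (hg.integrableOn_upper a)
  have hlower := hray (-(π * I)) (hf.integrableOn_lower a) (hg.integrableOn_lower a)
  have hvert : ∫ θ in -π..π, g (a + θ * I) * I = f (a + π * I) - f (a + (-π : ℝ) * I) :=
    intervalIntegral.integral_eq_sub_of_hasDerivAt
      (fun θ _ => by
        simpa using ((hfg (a + θ * I)).comp (θ : ℂ)
          (((hasDerivAt_id (θ : ℂ)).mul_const I).const_add (a : ℂ))).comp_ofReal)
      ((hg.continuousOn_vertical a).mul continuousOn_const).intervalIntegrable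
  rw [intervalIntegral.integral_mul_const] at hvert
  simp only [← sub_eq_add_neg] at hlower
  simp only [hankelIntegral, stripJump]
  rw [integral_sub (hg.integrableOn_upper a) (hg.integrableOn_lower a), hupper, hlower,
    mul_comm I, hvert]
  push_cast
  ring_nf

theorem exists_norm_hankelIntegral_exp_mul_le (hf : IsHankelIntegrand f) (a : ℝ) :
    ∃ K, ∀ t : ℝ, 0 ≤ t →
      ‖hankelIntegral (fun w => cexp (-t * w) * f w) a‖ ≤ rexp (-t * a) * K := by
  refine ⟨(2 * π)⁻¹ * ((∫ u in Ioi a, (‖f (u + π * I)‖ + ‖f (u - π * I)‖)) +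
    ∫ θ in -π..π, ‖f (a + θ * I)‖), fun t ht => ?_⟩
  have hdecay {w : ℂ} (hw : a ≤ w.re) : ‖cexp (-t * w) * f w‖ ≤ rexp (-t * a) * ‖f w‖ := by
    rw [norm_mul, Complex.norm_exp]
    gcongr
    simpa using mul_le_mul_of_nonneg_left hw ht
  have hedges : ‖∫ u in Ioi a, stripJump (fun w => cexp (-t * w) * f w) u‖ ≤
      rexp (-t * a) * ∫ u in Ioi a, (‖f (u + π * I)‖ + ‖f (u - π * I)‖) := by
    rw [← integral_const_mul]
    refine norm_integral_le_of_norm_le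
      (((hf.integrableOn_upper a).norm.add (hf.integrableOn_lower a).norm).const_mul _) ?_
    filter_upwards [ae_restrict_mem measurableSet_Ioi] with u (hu : a < u)
    rw [mul_add]
    exact (norm_sub_le _ _).trans
      (add_le_add (hdecay (by simpa using hu.le)) (hdecay (by simpa using hu.le)))
  have hvert : ‖∫ θ in -π..π, cexp (-t * (a + θ * I)) * f (a + θ * I)‖ ≤
      rexp (-t * a) * ∫ θ in -π..π, ‖f (a + θ * I)‖ := by
    rw [← intervalIntegral.integral_const_mul]
    exact intervalIntegral.norm_integral_le_of_norm_le (neg_le_self Real.pi_pos.le)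
      (.of_forall fun θ _ => hdecay (by simp))
      ((hf.continuousOn_vertical a).norm.intervalIntegrable.const_mul _)
  calc ‖hankelIntegral (fun w => cexp (-t * w) * f w) a‖
      ≤ (2 * π)⁻¹ * (rexp (-t * a) * (∫ u in Ioi a, (‖f (u + π * I)‖ + ‖f (u - π * I)‖)) +
          rexp (-t * a) * ∫ θ in -π..π, ‖f (a + θ * I)‖) := by
        rw [hankelIntegral, norm_mul]
        gcongr
        · simp [abs_of_pos Real.pi_pos]
        · exact (norm_add_le _ _).trans (by simpa using add_le_add hedges hvert)
    _ = _ := by ring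

theorem exists_norm_pow_mul_hankelIntegral_exp_mul_le (hf : IsHankelIntegrand f) {α : ℝ}
    (hα : 0 < α) (r : ℝ) :
    ∃ a K q : ℝ, 0 ≤ q ∧ q < 1 ∧ ∀ k : ℕ,
      ‖(r : ℂ) ^ k * hankelIntegral (fun w => cexp (-(k * α : ℝ) * w) * f w) a‖ ≤ K * q ^ k := by
  obtain ⟨K, hK⟩ := hf.exists_norm_hankelIntegral_exp_mul_le (|r| / α)
  refine ⟨|r| / α, K, |r| * rexp (-|r|), by positivity, ?_, fun k => ?_⟩
  · rw [Real.exp_neg, ← div_eq_mul_inv, div_lt_one (Real.exp_pos _)]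
    linarith [Real.add_one_le_exp |r|]
  · have hpow : rexp (-(k * α) * (|r| / α)) = rexp (-|r|) ^ k := by
      rw [← Real.exp_nat_mul]
      congr 1
      field_simp
    calc ‖(r : ℂ) ^ k * hankelIntegral (fun w => cexp (-(k * α : ℝ) * w) * f w) (|r| / α)‖
        ≤ |r| ^ k * (rexp (-(k * α) * (|r| / α)) * K) := by
          rw [norm_mul, norm_pow, Complex.norm_real, Real.norm_eq_abs]
          gcongr
          exact hK (k * α) (by positivity)
      _ = K * (|r| * rexp (-|r|)) ^ k := by rw [hpow, mul_pow]; ring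

end IsHankelIntegrand

theorem IsHankelIntegrand.of_norm_le {f : ℂ → ℂ} {C c : ℝ} (hf : DifferentiableOn ℂ f hankelStrip)
    (hupper : ∀ u : ℝ, ‖f (u + π * I)‖ ≤ C * rexp (c * u - rexp u))
    (hlower : ∀ u : ℝ, ‖f (u - π * I)‖ ≤ C * rexp (c * u - rexp u)) : IsHankelIntegrand f where
  differentiableOn := hf
  integrableOn_upper a := ((integrableOn_Ioi_exp_mul_sub_exp c a).const_mul C).mono'
    (continuous_comp_upper_edge hf.continuousOn).aestronglyMeasurable (.of_forall hupper)
  integrableOn_lower a := ((integrableOn_Ioi_exp_mul_sub_exp c a).const_mul C).mono'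
    (continuous_comp_lower_edge hf.continuousOn).aestronglyMeasurable (.of_forall hlower)

theorem norm_hankelIntegral_le_of_tendsto_zero {f : ℂ → ℂ} {C c : ℝ} (hc : 0 < c)
    (hf : DifferentiableOn ℂ f hankelStrip)
    (hupper : ∀ u : ℝ, ‖f (u + π * I)‖ ≤ C * rexp (c * u - rexp u))
    (hlower : ∀ u : ℝ, ‖f (u - π * I)‖ ≤ C * rexp (c * u - rexp u))
    (hlim : Tendsto f (comap Complex.re atBot ⊓ 𝓟 hankelStrip) (𝓝 0)) (a : ℝ) :
    ‖hankelIntegral f a‖ ≤ C * Real.Gamma c / π := by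
  have hint : Integrable fun u : ℝ => 2 * C * rexp (c * u - rexp u) :=
    (integrable_exp_mul_sub_exp hc).const_mul _
  have hle (u : ℝ) : ‖stripJump f u‖ ≤ 2 * C * rexp (c * u - rexp u) :=
    (norm_sub_le _ _).trans ((add_le_add (hupper u) (hlower u)).trans_eq (by ring))
  have hcont : Continuous (stripJump f) :=
    (continuous_comp_upper_edge hf.continuousOn).sub (continuous_comp_lower_edge hf.continuousOn)
  have hjump : ‖∫ u, stripJump f u‖ ≤ 2 * C * Real.Gamma c := by
    rw [← integral_exp_mul_sub_exp hc, ← integral_const_mul]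
    exact norm_integral_le_of_norm_le hint (.of_forall hle)
  rw [(IsHankelIntegrand.of_norm_le hf hupper hlower).hankelIntegral_eq_integral_stripJump_add
    (hint.mono' hcont.aestronglyMeasurable (.of_forall hle)) hlim, add_zero, norm_mul]
  calc ‖(2 * π * I)⁻¹‖ * ‖∫ u, stripJump f u‖
      ≤ ‖(2 * π * I)⁻¹‖ * (2 * C * Real.Gamma c) := by gcongr
    _ = C * Real.Gamma c / π := by
        simp only [norm_inv, norm_mul, Complex.norm_ofNat, Complex.norm_real, Complex.norm_I,
          Real.norm_eq_abs, abs_of_pos Real.pi_pos]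
        field_simp

/-- The integrand `ζ ^ (s - 1) * exp ζ dζ` of Hankel's integral for `1 / Γ (1 - s)`, in the
coordinate `w = log ζ`. -/
noncomputable def hankelKernel (s w : ℂ) : ℂ := cexp (s * w + cexp w)

theorem hankelKernel_eq_mul (s w : ℂ) : hankelKernel s w = cexp (s * w) * cexp (cexp w) :=
  Complex.exp_add _ _

theorem hankelKernel_add (s t w : ℂ) :
    hankelKernel (s + t) w = cexp (t * w) * hankelKernel s w := by
  rw [hankelKernel, hankelKernel, ← Complex.exp_add]
  ring_nf

theorem hasDerivAt_hankelKernel (s w : ℂ) :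
    HasDerivAt (hankelKernel s) (s * hankelKernel s w + hankelKernel (s + 1) w) w := by
  refine (((hasDerivAt_id' w).const_mul s).fun_add (Complex.hasDerivAt_exp w)).cexp.congr_deriv ?_
  rw [hankelKernel_add, one_mul, ← hankelKernel]
  ring

theorem norm_hankelKernel (s : ℂ) (u θ : ℝ) :
    ‖hankelKernel s (u + θ * I)‖ = rexp (s.re * u - s.im * θ + rexp u * cos θ) := by
  rw [hankelKernel, Complex.norm_exp]
  simp [Complex.exp_re]

theorem norm_hankelKernel_upper_edge (s : ℂ) (u : ℝ) :
    ‖hankelKernel s (u + π * I)‖ = rexp (-s.im * π) * rexp (s.re * u - rexp u) := by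
  rw [norm_hankelKernel, Real.cos_pi, ← Real.exp_add]
  ring_nf

theorem norm_hankelKernel_lower_edge (s : ℂ) (u : ℝ) :
    ‖hankelKernel s (u - π * I)‖ = rexp (s.im * π) * rexp (s.re * u - rexp u) := by
  have h := norm_hankelKernel s u (-π)
  rw [Real.cos_neg, Real.cos_pi, Complex.ofReal_neg, neg_mul, ← sub_eq_add_neg] at h
  rw [h, ← Real.exp_add]
  ring_nf

theorem isHankelIntegrand_hankelKernel (s : ℂ) : IsHankelIntegrand (hankelKernel s) := by
  refine .of_norm_le (C := rexp (|s.im| * π)) (c := s.re)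
    (fun w _ => (hasDerivAt_hankelKernel s w).differentiableAt.differentiableWithinAt)
    (fun u => ?_) (fun u => ?_)
  · rw [norm_hankelKernel_upper_edge]
    gcongr
    exact neg_le_abs _
  · rw [norm_hankelKernel_lower_edge]
    gcongr
    exact le_abs_self _

theorem stripJump_hankelKernel (s : ℂ) (u : ℝ) :
    stripJump (hankelKernel s) u = 2 * I * Complex.sin (π * s) * cexp (s * u - rexp u) := by
  have hupper : hankelKernel s (u + π * I) = cexp (π * s * I) * cexp (s * u - rexp u) := by
    rw [hankelKernel, Complex.exp_add_pi_mul_I, ← Complex.exp_add]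
    push_cast
    ring_nf
  have hlower : hankelKernel s (u - π * I) = cexp (-(π * s) * I) * cexp (s * u - rexp u) := by
    rw [hankelKernel, Complex.exp_sub_pi_mul_I, ← Complex.exp_add]
    push_cast
    ring_nf
  rw [stripJump, hupper, hlower, Complex.sin]
  linear_combination (cexp (π * s * I) - cexp (-(π * s) * I)) * cexp (s * u - rexp u) * Complex.I_sq

theorem tendsto_cexp_mul_hankelStrip {s : ℂ} (hs : 0 < s.re) :
    Tendsto (fun w => cexp (s * w)) (comap Complex.re atBot ⊓ 𝓟 hankelStrip) (𝓝 0) := by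
  rw [Complex.tendsto_exp_nhds_zero_iff]
  have hre : Tendsto (fun w : ℂ => s.re * w.re + |s.im| * π)
      (comap Complex.re atBot ⊓ 𝓟 hankelStrip) atBot :=
    tendsto_atBot_add_const_right _ _
      ((tendsto_comap.const_mul_atBot hs).mono_left inf_le_left)
  refine tendsto_atBot_mono' _ ?_ hre
  filter_upwards [mem_inf_of_right (mem_principal_self _)] with w hw
  have him : -(s.im * w.im) ≤ |s.im| * π :=
    (neg_le_abs _).trans (by rw [abs_mul]; gcongr; exact abs_le.2 hw)
  rw [Complex.mul_re]
  linarith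

theorem tendsto_cexp_cexp_hankelStrip :
    Tendsto (fun w => cexp (cexp w)) (comap Complex.re atBot ⊓ 𝓟 hankelStrip) (𝓝 1) := by
  simpa [Function.comp_def] using (Complex.continuous_exp.tendsto 0).comp
    (Complex.tendsto_exp_comap_re_atBot.mono_left inf_le_left)

theorem tendsto_hankelKernel {s : ℂ} (hs : 0 < s.re) :
    Tendsto (hankelKernel s) (comap Complex.re atBot ⊓ 𝓟 hankelStrip) (𝓝 0) := by
  simpa [hankelKernel_eq_mul, funext (hankelKernel_eq_mul s)] using
    (tendsto_cexp_mul_hankelStrip hs).mul tendsto_cexp_cexp_hankelStrip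

theorem hankelIntegral_hankelKernel_add_one (s : ℂ) (a : ℝ) :
    hankelIntegral (hankelKernel (s + 1)) a = -s * hankelIntegral (hankelKernel s) a := by
  have hs := isHankelIntegrand_hankelKernel s
  have hs1 := isHankelIntegrand_hankelKernel (s + 1)
  have h := hs.hankelIntegral_eq_zero_of_hasDerivAt ((hs.const_mul s).add hs1)
    (hasDerivAt_hankelKernel s) a
  rw [(hs.const_mul s).hankelIntegral_add hs1, hankelIntegral_const_mul] at h
  linear_combination h

theorem hankelIntegral_hankelKernel_of_re_pos {s : ℂ} (hs : 0 < s.re) (a : ℝ) :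
    hankelIntegral (hankelKernel s) a = (Complex.Gamma (1 - s))⁻¹ := by
  have hjump : stripJump (hankelKernel s) =
      fun u : ℝ => 2 * I * Complex.sin (π * s) * cexp (s * u - rexp u) :=
    funext (stripJump_hankelKernel s)
  -- At positive integers `s` this holds because Mathlib sets `Γ (1 - s) = 0` and `π / 0 = 0`.
  have hreflection : Complex.Gamma (1 - s) = π / Complex.sin (π * s) / Complex.Gamma s :=
    eq_div_of_mul_eq (Complex.Gamma_ne_zero_of_re_pos hs)
      (by rw [mul_comm, Complex.Gamma_mul_Gamma_one_sub])
  rw [(isHankelIntegrand_hankelKernel s).hankelIntegral_eq_integral_stripJump_add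
    (hjump ▸ (integrable_cexp_mul_sub_exp hs).const_mul _) (tendsto_hankelKernel hs), hjump,
    integral_const_mul, integral_cexp_mul_sub_exp hs, hreflection]
  field_simp
  simp

theorem hankelIntegral_hankelKernel_zero (a : ℝ) : hankelIntegral (hankelKernel 0) a = 1 := by
  have hjump : stripJump (hankelKernel 0) = 0 := funext fun u => by simp [stripJump_hankelKernel]
  rw [(isHankelIntegrand_hankelKernel 0).hankelIntegral_eq_integral_stripJump_add
    (hjump ▸ integrable_zero _ _ _) (ℓ := 1)
    (by simpa [funext (hankelKernel_eq_mul 0)] using tendsto_cexp_cexp_hankelStrip), hjump]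
  simp

theorem hankelIntegral_hankelKernel (s : ℂ) (a : ℝ) :
    hankelIntegral (hankelKernel s) a = (Complex.Gamma (1 - s))⁻¹ := by
  obtain ⟨n, hn⟩ := exists_nat_gt (-s.re)
  induction n generalizing s with
  | zero => exact hankelIntegral_hankelKernel_of_re_pos (by simpa using hn) a
  | succ n ih =>
    rcases eq_or_ne s 0 with rfl | hs
    · simp [hankelIntegral_hankelKernel_zero]
    · have hsucc := ih (s + 1) (by
        rw [Complex.add_re, Complex.one_re]
        push_cast at hn
        linarith)
      rw [hankelIntegral_hankelKernel_add_one, sub_add_cancel_right,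
        Complex.one_div_Gamma_eq_self_mul_one_div_Gamma_add_one, neg_add_eq_sub] at hsucc
      exact mul_left_cancel₀ (neg_ne_zero.2 hs) hsucc

theorem mul_abs_sin_im_le_norm_add_cexp {x : ℝ} (hx : 0 ≤ x) (z : ℂ) :
    x * |sin z.im| ≤ ‖x + cexp z‖ := by
  have hrotate : (x + cexp z) * cexp ((-z.im : ℝ) * I) =
      x * cexp ((-z.im : ℝ) * I) + rexp z.re := by
    rw [add_mul, ← Complex.exp_add, Complex.ofReal_exp]
    congr 2
    nth_rw 1 [← Complex.re_add_im z]
    push_cast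
    ring
  calc x * |sin z.im| = |(x * cexp ((-z.im : ℝ) * I) + rexp z.re).im| := by
        rw [Complex.add_im, Complex.ofReal_im, Complex.im_ofReal_mul, Complex.exp_ofReal_mul_I_im,
          Real.sin_neg, add_zero, abs_mul, abs_neg, abs_of_nonneg hx]
    _ ≤ ‖x * cexp ((-z.im : ℝ) * I) + rexp z.re‖ := Complex.abs_im_le_norm _
    _ = ‖x + cexp z‖ := by
        rw [← hrotate, norm_mul, Complex.norm_exp_ofReal_mul_I, mul_one]

theorem ofReal_add_cexp_ne_zero {x : ℝ} (hx : 0 < x) {z : ℂ} (hz : |z.im| < π) :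
    x + cexp z ≠ 0 := by
  intro h
  have hexp : cexp z = (-x : ℝ) := by
    rw [Complex.ofReal_neg]
    exact eq_neg_of_add_eq_zero_right h
  have him : z.im = π := by
    rw [← Complex.log_exp (abs_lt.1 hz).1 (abs_lt.1 hz).2.le, hexp, Complex.log_im,
      Complex.arg_ofReal_of_neg (neg_lt_zero.2 hx)]
  exact hz.ne (by rw [him, abs_of_pos Real.pi_pos])

/-- The integrand `ζ ^ (β - 1) * exp ζ / (x + ζ ^ α) dζ`, whose Hankel integral for `β = α` is
`E_α(-x)`, in the coordinate `w = log ζ`. -/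
noncomputable def mittagLefflerKernel (α β x : ℝ) (w : ℂ) : ℂ :=
  hankelKernel β w / (x + cexp (α * w))

theorem ofReal_add_cexp_mul_ne_zero {α x : ℝ} (hα : |α| < 1) (hx : 0 < x) {w : ℂ}
    (hw : w ∈ hankelStrip) : x + cexp (α * w) ≠ 0 := by
  refine ofReal_add_cexp_ne_zero hx ?_
  calc |(α * w : ℂ).im| = |α| * |w.im| := by rw [Complex.im_ofReal_mul, abs_mul]
    _ ≤ |α| * π := by
      gcongr
      exact abs_le.2 hw
    _ < π := mul_lt_of_lt_one_left Real.pi_pos hα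

theorem mittagLefflerKernel_sub (α β γ x : ℝ) (w : ℂ) :
    mittagLefflerKernel α (β - γ) x w = cexp (-γ * w) * mittagLefflerKernel α β x w := by
  rw [mittagLefflerKernel, Complex.ofReal_sub, sub_eq_add_neg, hankelKernel_add, mul_div_assoc,
    mittagLefflerKernel]

theorem differentiableOn_mittagLefflerKernel {α x : ℝ} (hα : |α| < 1) (hx : 0 < x) (β : ℝ) :
    DifferentiableOn ℂ (mittagLefflerKernel α β x) hankelStrip :=
  (isHankelIntegrand_hankelKernel β).differentiableOn.div (by fun_prop)
    fun _ hw => ofReal_add_cexp_mul_ne_zero hα hx hw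

theorem norm_mittagLefflerKernel_le {α x θ : ℝ} (hθ : sin (α * θ) ≠ 0) (hx : 0 < x) (β u : ℝ) :
    ‖mittagLefflerKernel α β x (u + θ * I)‖ ≤
      (x * |sin (α * θ)|)⁻¹ * rexp (β * u + rexp u * cos θ) := by
  have hden := mul_abs_sin_im_le_norm_add_cexp hx.le (α * (u + θ * I))
  have him : (α * (u + θ * I) : ℂ).im = α * θ := by simp
  rw [him] at hden
  rw [mittagLefflerKernel, norm_div, norm_hankelKernel, inv_mul_eq_div, Complex.ofReal_re,
    Complex.ofReal_im, zero_mul, sub_zero]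
  gcongr

theorem norm_mittagLefflerKernel_upper_edge_le {α x : ℝ} (hα : 0 < sin (α * π)) (hx : 0 < x)
    (β u : ℝ) : ‖mittagLefflerKernel α β x (u + π * I)‖ ≤
      (x * sin (α * π))⁻¹ * rexp (β * u - rexp u) := by
  simpa [abs_of_pos hα, ← sub_eq_add_neg] using norm_mittagLefflerKernel_le hα.ne' hx β u

theorem norm_mittagLefflerKernel_lower_edge_le {α x : ℝ} (hα : 0 < sin (α * π)) (hx : 0 < x)
    (β u : ℝ) : ‖mittagLefflerKernel α β x (u - π * I)‖ ≤
      (x * sin (α * π))⁻¹ * rexp (β * u - rexp u) := by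
  have h := norm_mittagLefflerKernel_le (θ := -π) (by simpa using hα.ne') hx β u
  rw [mul_neg, Real.sin_neg, abs_neg, abs_of_pos hα] at h
  simpa [← sub_eq_add_neg] using h

theorem sin_mul_pi_pos {α : ℝ} (hα : 0 < α) (hα1 : α < 1) : 0 < sin (α * π) :=
  Real.sin_pos_of_pos_of_lt_pi (by positivity) (by nlinarith [Real.pi_pos])

theorem isHankelIntegrand_mittagLefflerKernel {α x : ℝ} (hα : 0 < α) (hα1 : α < 1) (hx : 0 < x)
    (β : ℝ) : IsHankelIntegrand (mittagLefflerKernel α β x) :=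
  .of_norm_le (differentiableOn_mittagLefflerKernel (abs_lt.2 ⟨by linarith, hα1⟩) hx β)
    (norm_mittagLefflerKernel_upper_edge_le (sin_mul_pi_pos hα hα1) hx β)
    (norm_mittagLefflerKernel_lower_edge_le (sin_mul_pi_pos hα hα1) hx β)

theorem tendsto_mittagLefflerKernel {α β x : ℝ} (hα : 0 < α) (hβ : 0 < β) (hx : x ≠ 0) :
    Tendsto (mittagLefflerKernel α β x) (comap Complex.re atBot ⊓ 𝓟 hankelStrip) (𝓝 0) := by
  have hnum := tendsto_hankelKernel (s := β) hβ
  have hden := (tendsto_cexp_mul_hankelStrip (s := α) hα).const_add (x : ℂ)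
  have hquot := hnum.div hden (by simpa using hx)
  rwa [zero_div] at hquot

theorem norm_hankelIntegral_mittagLefflerKernel_le {α β x : ℝ} (hα : 0 < α) (hα1 : α < 1)
    (hβ : 0 < β) (hx : 0 < x) (a : ℝ) :
    ‖hankelIntegral (mittagLefflerKernel α β x) a‖ ≤
      (x * sin (α * π))⁻¹ * Real.Gamma β / π :=
  norm_hankelIntegral_le_of_tendsto_zero hβ
    (differentiableOn_mittagLefflerKernel (abs_lt.2 ⟨by linarith, hα1⟩) hx β)
    (norm_mittagLefflerKernel_upper_edge_le (sin_mul_pi_pos hα hα1) hx β)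
    (norm_mittagLefflerKernel_lower_edge_le (sin_mul_pi_pos hα hα1) hx β)
    (tendsto_mittagLefflerKernel hα hβ hx.ne') a

theorem hankelIntegral_mittagLefflerKernel_recurrence {α x : ℝ} (hα : 0 < α) (hα1 : α < 1)
    (hx : 0 < x) (β a : ℝ) :
    x * hankelIntegral (mittagLefflerKernel α β x) a +
      hankelIntegral (mittagLefflerKernel α (β + α) x) a = (Real.Gamma (1 - β))⁻¹ := by
  have hβ := isHankelIntegrand_mittagLefflerKernel hα hα1 hx β
  have hβα := isHankelIntegrand_mittagLefflerKernel hα hα1 hx (β + α)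
  have hkernel : EqOn
      (fun w => x * mittagLefflerKernel α β x w + mittagLefflerKernel α (β + α) x w)
      (hankelKernel β) hankelStrip := fun w hw => by
    have hden := ofReal_add_cexp_mul_ne_zero (abs_lt.2 ⟨by linarith, hα1⟩) hx hw
    simp only [mittagLefflerKernel, Complex.ofReal_add, hankelKernel_add]
    field_simp
  rw [← hankelIntegral_const_mul, ← (hβ.const_mul x).hankelIntegral_add hβα,
    hankelIntegral_congr hkernel, hankelIntegral_hankelKernel]
  push_cast [← Complex.Gamma_ofReal]
  rfl

theorem hankelIntegral_mittagLefflerKernel_eq_sum {α x : ℝ} (hα : 0 < α) (hα1 : α < 1)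
    (hx : 0 < x) (a : ℝ) (n : ℕ) :
    hankelIntegral (mittagLefflerKernel α α x) a =
      (∑ k ∈ Finset.range n, (-x) ^ k / Real.Gamma (1 + k * α) : ℝ) +
        (-x : ℂ) ^ n * hankelIntegral (mittagLefflerKernel α (α - n * α) x) a := by
  induction n with
  | zero => simp
  | succ n ih =>
    have h := hankelIntegral_mittagLefflerKernel_recurrence hα hα1 hx (-(n * α)) a
    rw [neg_add_eq_sub, sub_neg_eq_add] at h
    have hβ : α - (n + 1 : ℕ) * α = -(n * α) := by
      push_cast
      ring
    rw [ih, Finset.sum_range_succ, eq_sub_of_add_eq' h, hβ]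
    push_cast
    ring

theorem summable_mittagLeffler {α : ℝ} (hα : 0 < α) (r : ℝ) :
    Summable fun k : ℕ => r ^ k / Real.Gamma (1 + k * α) := by
  obtain ⟨a, K, q, hq0, hq1, hK⟩ :=
    (isHankelIntegrand_hankelKernel 0).exists_norm_pow_mul_hankelIntegral_exp_mul_le hα r
  refine .of_norm_bounded ((summable_geometric_of_lt_one hq0 hq1).mul_left K) fun k => ?_
  have hterm : ((r ^ k / Real.Gamma (1 + k * α) : ℝ) : ℂ) =
      r ^ k * hankelIntegral (fun w => cexp (-(k * α : ℝ) * w) * hankelKernel 0 w) a := by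
    simp only [← hankelKernel_add, zero_add]
    rw [hankelIntegral_hankelKernel, sub_neg_eq_add, div_eq_mul_inv]
    push_cast [← Complex.Gamma_ofReal]
    rfl
  rw [← Complex.norm_real, hterm]
  exact hK k

theorem mittagLeffler_neg_eq_hankelIntegral {α x : ℝ} (hα : 0 < α) (hα1 : α < 1) (hx : 0 < x)
    (a : ℝ) : (mittagLeffler α (-x) : ℂ) = hankelIntegral (mittagLefflerKernel α α x) a := by
  have hQ := isHankelIntegrand_mittagLefflerKernel hα hα1 hx α
  obtain ⟨b, K, q, hq0, hq1, hK⟩ := hQ.exists_norm_pow_mul_hankelIntegral_exp_mul_le hα (-x)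
  have htail : Tendsto (fun n : ℕ => (-x : ℂ) ^ n *
      hankelIntegral (mittagLefflerKernel α (α - n * α) x) b) atTop (𝓝 0) := by
    refine squeeze_zero_norm (fun n => ?_)
      (by simpa using (tendsto_pow_atTop_nhds_zero_of_lt_one hq0 hq1).const_mul K)
    simpa only [funext (mittagLefflerKernel_sub α α (n * α) x), Complex.ofReal_neg] using hK n
  have hsum := (Complex.continuous_ofReal.tendsto _).comp
    (summable_mittagLeffler hα (-x)).hasSum.tendsto_sum_nat
  have hlim := tendsto_const_nhds (f := atTop).congr
    (hankelIntegral_mittagLefflerKernel_eq_sum hα hα1 hx b)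
  rw [hQ.hankelIntegral_indep a b]
  simpa [mittagLeffler] using tendsto_nhds_unique (hsum.add htail) hlim

theorem abs_mittagLeffler_neg_sub_le {α x : ℝ} (hα : 0 < α) (hα1 : α < 1) (hx : 0 < x) :
    |mittagLeffler α (-x) - 1 / (Real.Gamma (1 - α) * x)| ≤
      Real.Gamma (2 * α) / (π * sin (α * π)) / x ^ 2 := by
  have hrec := hankelIntegral_mittagLefflerKernel_recurrence hα hα1 hx α 0
  rw [← mittagLeffler_neg_eq_hankelIntegral hα hα1 hx, ← two_mul] at hrec
  have hremainder : ((mittagLeffler α (-x) - 1 / (Real.Gamma (1 - α) * x) : ℝ) : ℂ) =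
      -(x : ℂ)⁻¹ * hankelIntegral (mittagLefflerKernel α (2 * α) x) 0 := by
    have hx' : (x : ℂ) ≠ 0 := by exact_mod_cast hx.ne'
    rw [eq_sub_of_add_eq' hrec]
    push_cast
    field_simp
    ring
  calc |mittagLeffler α (-x) - 1 / (Real.Gamma (1 - α) * x)|
      = x⁻¹ * ‖hankelIntegral (mittagLefflerKernel α (2 * α) x) 0‖ := by
        rw [← Real.norm_eq_abs, ← Complex.norm_real, hremainder]
        simp [abs_of_pos hx]
    _ ≤ x⁻¹ * ((x * sin (α * π))⁻¹ * Real.Gamma (2 * α) / π) := by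
        gcongr
        exact norm_hankelIntegral_mittagLefflerKernel_le hα hα1 (by positivity) hx 0
    _ = Real.Gamma (2 * α) / (π * sin (α * π)) / x ^ 2 := by field_simp

end Hankel

theorem mittagLeffler_asymp_bot (α : ℝ) (hα : 0 < α) (hα1 : α < 1) :
    ∃ C > (0 : ℝ), ∃ R > (0 : ℝ), ∀ r : ℝ, r ≤ -R →
      |mittagLeffler α r + 1 / (Real.Gamma (1 - α) * r)| ≤ C / r ^ 2 := by
  have hsin := sin_mul_pi_pos hα hα1
  refine ⟨Real.Gamma (2 * α) / (π * sin (α * π)), by positivity, 1, one_pos, fun r hr => ?_⟩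
  simpa using abs_mittagLeffler_neg_sub_le hα hα1 (x := -r) (by linarith)
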